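/- Let M be a symmetric matrix with entries in {0,1,*}, indexed by a finite set D, let S ⊆ D, and let k be an integer with k > |D|. Let ℓ = |{i ∈ S : M_{i,i} = 0}|. Consider the functions σ : {1,…,k} → D whose image is exactly S and which satisfy M_{σ(u),σ(v)} ∈ {1,*} for all distinct u, v ∈ {1,…,k} (these are the S-surjective M-partitions of the complete graph on k vertices). If ℓ = |S|, or there exist distinct i, j ∈ S with M_{i,j} = 0, then there are no such functions. Otherwise, the number of such functions is exactly k⁽ℓ⁾ · (|S|−ℓ)! · S(k−ℓ, |S|−ℓ). -/

import Mathlib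

/-- The three possible entries `0`, `1`, `*` of a matrix-partition matrix. -/
inductive Entry : Type
  | zero | one | star
deriving DecidableEq

/-- Stirling numbers of the second kind: `stirling2 n k` is the number of
partitions of an `n`-element set into `k` nonempty blocks. -/
def stirling2 : ℕ → ℕ → ℕ
  | 0, 0 => 1
  | 0, _ + 1 => 0
  | _ + 1, 0 => 0
  | n + 1, k + 1 => (k + 1) * stirling2 n (k + 1) + stirling2 n k

open Classical in
noncomputable def PP {D : Type} {k : ℕ} (Z B : Finset D) (σ : Fin k → D) : Prop :=
  (∀ u, σ u ∈ Z ∪ B) ∧ (∀ u v, σ u ∈ Z → σ u = σ v → u = v) ∧ (∀ i ∈ Z ∪ B, ∃ u, σ u = i)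

open Classical in
noncomputable def NN {D : Type} [Fintype D] (k : ℕ) (Z B : Finset D) : ℕ :=
  ∑ σ : Fin k → D, if PP Z B σ then 1 else 0

open Classical in
lemma PP_Z {D : Type} {k : ℕ} (Z B : Finset D) (h : Disjoint Z B) (d : D) (hd : d ∈ Z)
    (τ : Fin k → D) : PP Z B (Fin.cons d τ : Fin (k+1) → D) ↔ PP (Z.erase d) B τ := by
  have hdB : d ∉ B := Finset.disjoint_left.mp h hd
  unfold PP
  simp only [Fin.forall_fin_succ, Fin.exists_fin_succ, Fin.cons_zero, Fin.cons_succ,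
    Finset.mem_union, Finset.mem_erase, Fin.succ_inj]
  constructor
  · rintro ⟨⟨h1, h2⟩, ⟨h3, h4⟩, h5⟩
    have key : ∀ u, τ u ≠ d := fun u hu => absurd (h3.2 u hd hu.symm) (Fin.succ_ne_zero u).symm
    refine ⟨fun u => ?_, fun u v hu huv => (h4 u).2 v hu.2 huv, fun i hi => ?_⟩
    · have := h2 u; have := key u; tauto
    · have hid : d ≠ i := by rintro rfl; tauto
      have := h5 i (by tauto); tauto
  · rintro ⟨h1, h2, h3⟩
    have key : ∀ u, τ u ≠ d := by
      intro u hu; have := h1 u; rw [hu] at this; tauto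
    refine ⟨⟨Or.inl hd, fun u => by have := h1 u; tauto⟩,
      ⟨⟨fun _ _ => trivial, fun u _ e => absurd e.symm (key u)⟩,
        fun u => ⟨fun _ e => absurd e (key u), fun v hu e => h2 u v ⟨key u, hu⟩ e⟩⟩, fun i hi => ?_⟩
    by_cases e : d = i
    · exact Or.inl e
    · exact Or.inr (h3 i (by have := Ne.symm e; tauto))

open Classical in
lemma PP_B {D : Type} {k : ℕ} (Z B : Finset D) (h : Disjoint Z B) (d : D) (hd : d ∈ B)
    (τ : Fin k → D) : PP Z B (Fin.cons d τ : Fin (k+1) → D) ↔ (PP Z B τ ∨ PP Z (B.erase d) τ) := by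
  have hdB : d ∉ Z := Finset.disjoint_right.mp h hd
  unfold PP
  simp only [Fin.forall_fin_succ, Fin.exists_fin_succ, Fin.cons_zero, Fin.cons_succ,
    Finset.mem_union, Finset.mem_erase, Fin.succ_inj]
  constructor
  · rintro ⟨⟨h1, h2⟩, ⟨h3, h4⟩, h5⟩
    by_cases key : ∃ u, τ u = d
    · refine Or.inl ⟨h2, fun u v hu e => (h4 u).2 v hu e, fun i hi => ?_⟩
      rcases h5 i hi with rfl | h
      · exact key
      · exact h
    · push Not at key
      refine Or.inr ⟨fun u => ?_, fun u v hu e => (h4 u).2 v hu e, fun i hi => ?_⟩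
      · have := h2 u; have := key u; tauto
      · have hid : d ≠ i := by rintro rfl; tauto
        have := h5 i (by tauto); tauto
  · intro H
    have a1 : ∀ u, τ u ∈ Z ∨ τ u ∈ B := by
      intro u
      rcases H with H | H
      · exact H.1 u
      · have := H.1 u; tauto
    have a2 : ∀ u v, τ u ∈ Z → τ u = τ v → u = v := by
      rcases H with H | H <;> exact H.2.1
    refine ⟨⟨Or.inr hd, a1⟩, ⟨⟨fun _ _ => trivial, fun u hz => absurd hz hdB⟩,
      fun u => ⟨fun hz e => absurd (e ▸ hz) hdB, fun v hu e => a2 u v hu e⟩⟩, fun i hi => ?_⟩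
    by_cases e : d = i
    · exact Or.inl e
    · rcases H with H | H
      · exact Or.inr (H.2.2 i hi)
      · exact Or.inr (H.2.2 i (by have := Ne.symm e; tauto))

open Classical in
lemma NN_succ {D : Type} [Fintype D] (k : ℕ) (Z B : Finset D) (h : Disjoint Z B) :
    NN (k+1) Z B = ∑ d ∈ Z, NN k (Z.erase d) B + ∑ d ∈ B, (NN k Z B + NN k Z (B.erase d)) := by
  have h0 : NN (k+1) Z B = ∑ d : D, ∑ τ : Fin k → D,
      if PP Z B (Fin.cons d τ : Fin (k+1) → D) then 1 else 0 := by
    unfold NN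
    rw [← Fintype.sum_prod_type', ← Equiv.sum_comp (Fin.consEquiv (fun _ : Fin (k+1) => D))]
    rfl
  rw [h0]
  trans ∑ d ∈ Z ∪ B, ∑ τ : Fin k → D,
      if PP Z B (Fin.cons d τ : Fin (k+1) → D) then 1 else 0
  · symm
    apply Finset.sum_subset (Finset.subset_univ _)
    intro d _ hd
    apply Finset.sum_eq_zero
    intro τ _
    rw [if_neg]
    intro hP
    exact hd (hP.1 0)
  · rw [Finset.sum_union h]
    congr 1
    · refine Finset.sum_congr rfl fun d hd => ?_
      unfold NN
      refine Finset.sum_congr rfl fun τ _ => ?_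
      simp only [PP_Z Z B h d hd τ]
    · refine Finset.sum_congr rfl fun d hd => ?_
      unfold NN
      rw [← Finset.sum_add_distrib]
      refine Finset.sum_congr rfl fun τ _ => ?_
      simp only [PP_B Z B h d hd τ]
      have hx : ¬ (PP Z B τ ∧ PP Z (B.erase d) τ) := by
        rintro ⟨h1, h2⟩
        obtain ⟨u, hu⟩ := h1.2.2 d (Finset.mem_union_right _ hd)
        have := h2.1 u
        rw [hu] at this
        have hdB : d ∉ Z := Finset.disjoint_right.mp h hd
        simp [hdB] at this
      by_cases h1 : PP Z B τ <;> by_cases h2 : PP Z (B.erase d) τ <;> simp_all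

lemma desc_succ (k z : ℕ) : (k+1).descFactorial (z+1) = k.descFactorial (z+1) + (z+1) * k.descFactorial z := by
  rw [Nat.succ_descFactorial_succ, Nat.descFactorial_succ]
  by_cases h : z ≤ k
  · rw [← add_mul]; congr 1; omega
  · rw [Nat.descFactorial_eq_zero_iff_lt.mpr (by omega)]; simp

lemma st_zero (n : ℕ) (h : 0 < n) : stirling2 n 0 = 0 := by
  cases n with
  | zero => omega
  | succ n => rfl

lemma NN_eq {D : Type} [Fintype D] (k : ℕ) : ∀ (Z B : Finset D), Disjoint Z B →
    NN k Z B = k.descFactorial Z.card * B.card.factorial * stirling2 (k - Z.card) B.card := by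
  classical
  induction k with
  | zero =>
    intro Z B h
    have : PP Z B (default : Fin 0 → D) ↔ Z ∪ B = ∅ := by
      simp [PP, Finset.eq_empty_iff_forall_notMem]
    unfold NN
    rw [Fintype.sum_unique, if_congr this rfl rfl]
    rcases Z.eq_empty_or_nonempty with rfl | hZ
    · rcases B.eq_empty_or_nonempty with rfl | hB
      · simp [stirling2]
      · obtain ⟨b, hb⟩ := Nat.exists_eq_succ_of_ne_zero hB.card_pos.ne'
        simp [hb, stirling2, hB.ne_empty]
    · obtain ⟨b, hb⟩ := Nat.exists_eq_succ_of_ne_zero hZ.card_pos.ne'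
      simp [hb, hZ.ne_empty]
  | succ k ih =>
    intro Z B h
    rw [NN_succ k Z B h]
    have e1 : ∑ d ∈ Z, NN k (Z.erase d) B = Z.card * (k.descFactorial (Z.card - 1) *
        B.card.factorial * stirling2 (k - (Z.card - 1)) B.card) := by
      rw [← smul_eq_mul, ← Finset.sum_const]
      refine Finset.sum_congr rfl fun d hd => ?_
      rw [ih _ _ (h.mono_left (Finset.erase_subset _ _)), Finset.card_erase_of_mem hd]
    have e2 : ∑ d ∈ B, (NN k Z B + NN k Z (B.erase d)) = B.card * (k.descFactorial Z.card *
        B.card.factorial * stirling2 (k - Z.card) B.card + k.descFactorial Z.card *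
        (B.card-1).factorial * stirling2 (k - Z.card) (B.card - 1)) := by
      rw [← smul_eq_mul, ← Finset.sum_const]
      refine Finset.sum_congr rfl fun d hd => ?_
      rw [ih _ _ h, ih _ _ (h.mono_right (Finset.erase_subset _ _)), Finset.card_erase_of_mem hd]
    rw [e1, e2]
    generalize Z.card = z
    generalize B.card = b
    have e3 : (k+1).descFactorial z = k.descFactorial z + z * k.descFactorial (z-1) := by
      cases z with
      | zero => simp
      | succ z => exact desc_succ k z
    have e4 : z * k.descFactorial (z-1) * stirling2 (k - (z-1)) b =
        z * k.descFactorial (z-1) * stirling2 (k + 1 - z) b := by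
      cases z with
      | zero => simp
      | succ z => simp
    have e5 : k.descFactorial z * b.factorial * stirling2 (k+1-z) b =
        b * (k.descFactorial z * b.factorial * stirling2 (k - z) b + k.descFactorial z *
        (b-1).factorial * stirling2 (k - z) (b - 1)) := by
      by_cases hz : z ≤ k
      · rw [show k + 1 - z = (k - z) + 1 by omega]
        cases b with
        | zero => simp [stirling2]
        | succ b =>
          simp only [stirling2, Nat.factorial_succ, Nat.add_sub_cancel]
          ring
      · rw [Nat.descFactorial_eq_zero_iff_lt.mpr (by omega)]; simp
    rw [← e5, e3]
    linear_combination b.factorial * e4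

/-- Counting `S`-surjective `M`-partitions of the complete graph on `k > |D|` vertices:
with `ℓ = |{i ∈ S : M i i = 0}|`, if `ℓ = |S|` or some distinct `i,j ∈ S` have
`M i j = 0` there are none; otherwise there are `k⁽ℓ⁾·(|S|−ℓ)!·S(k−ℓ,|S|−ℓ)`. -/
theorem stmt6 {D : Type} [Fintype D] (M : D → D → Entry)
    (hsym : ∀ i j, M i j = M j i) (S : Set D) (k : ℕ) (hk : Fintype.card D < k)
    (ℓ : ℕ) (hℓ : ℓ = (S ∩ {i | M i i = Entry.zero}).ncard) :
    ((ℓ = S.ncard ∨ ∃ i ∈ S, ∃ j ∈ S, i ≠ j ∧ M i j = Entry.zero) →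
      Nat.card {σ : Fin k → D // Set.range σ = S ∧
        ∀ u v : Fin k, u ≠ v → M (σ u) (σ v) ≠ Entry.zero} = 0) ∧
    (¬ (ℓ = S.ncard ∨ ∃ i ∈ S, ∃ j ∈ S, i ≠ j ∧ M i j = Entry.zero) →
      Nat.card {σ : Fin k → D // Set.range σ = S ∧
        ∀ u v : Fin k, u ≠ v → M (σ u) (σ v) ≠ Entry.zero} =
      k.descFactorial ℓ * (S.ncard - ℓ).factorial * stirling2 (k - ℓ) (S.ncard - ℓ)) := by
  classical
  constructor
  · intro H
    rw [Nat.card_eq_zero]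
    left
    constructor
    rintro ⟨σ, hS, hσ⟩
    rcases H with H | ⟨i, hi, j, hj, hij, hM⟩
    · have hsub : S ∩ {i | M i i = Entry.zero} = S :=
        Set.eq_of_subset_of_ncard_le Set.inter_subset_left (by omega) (Set.toFinite _)
      have hinj : Function.Injective σ := by
        intro u v e
        by_contra huv
        have h1 : σ u ∈ S ∩ {i | M i i = Entry.zero} := by
          rw [hsub, ← hS]; exact Set.mem_range_self u
        have h2 := hσ u v huv
        rw [← e] at h2
        exact h2 h1.2
      have := Fintype.card_le_of_injective σ hinj
      simp at this
      omega
    · rw [← hS] at hi hj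
      obtain ⟨u, rfl⟩ := hi
      obtain ⟨v, rfl⟩ := hj
      exact hσ u v (fun e => hij (by rw [e])) hM
  · intro H
    push Not at H
    obtain ⟨-, H⟩ := H
    set Z : Finset D := (S ∩ {i | M i i = Entry.zero}).toFinset with hZ
    set B : Finset D := (S \ {i | M i i = Entry.zero}).toFinset with hB
    have hd : Disjoint Z B := by
      rw [Finset.disjoint_left]
      intro a; simp [hZ, hB]; tauto
    have hZc : Z.card = ℓ := by rw [hℓ, hZ, Set.ncard_eq_toFinset_card']
    have hBc : B.card = S.ncard - ℓ := by
      have := Set.ncard_inter_add_ncard_sdiff_eq_ncard S {i | M i i = Entry.zero} (Set.toFinite _)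
      rw [hB, ← Set.ncard_eq_toFinset_card']
      omega
    rw [← hBc, ← hZc, ← NN_eq k Z B hd, NN, Finset.sum_boole, Nat.cast_id,
      Nat.card_eq_fintype_card, Fintype.card_subtype]
    congr 1
    ext σ
    simp only [Finset.mem_filter, Finset.mem_univ, true_and]
    have hmem : ∀ i, i ∈ Z ∪ B ↔ i ∈ S := by
      intro i; simp [hZ, hB]; tauto
    unfold PP
    simp only [hmem]
    constructor
    · rintro ⟨hS, hσ⟩
      refine ⟨fun u => hS ▸ Set.mem_range_self u, fun u v hu e => ?_, fun i hi => ?_⟩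
      · by_contra huv
        have h2 := hσ u v huv
        rw [← e] at h2
        simp [hZ] at hu
        exact h2 hu.2
      · rw [← hS] at hi; exact hi
    · rintro ⟨h1, h2, h3⟩
      refine ⟨Set.Subset.antisymm (by rintro _ ⟨u, rfl⟩; exact h1 u) (fun i hi => h3 i hi), ?_⟩
      intro u v huv hM
      by_cases e : σ u = σ v
      · refine huv (h2 u v ?_ e)
        rw [← e] at hM
        simp [hZ, hM, h1 u]
      · exact H _ (h1 u) _ (h1 v) e hM
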